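/- arXiv:2106.13313 — 2 statements merged into one kernel-verified Lean document; each statement's English description precedes it below -/
import Mathlib

section
/- There exists a universal constant C such that for all 0 ≤ s < t, all a > 0, all ρ ∈ L²([s,t]×ℝ), and all x, y ∈ ℝ, one has |P(ρ; (s,y) → (t,x))| ≤ C exp( a² C (t−s) + a^{-1} ‖ρ‖²_{L²([s,t]×ℝ)} ) · p(t−s, x−y). -/
/-!
The `n`-th Duhamel term is at most `2⁻ⁿ e^{M(t-s)} e^{G(t)/a} p(t-s, x-y)`, where `M = 9a²/2` and
`G(t) = ∫_s^t ∫ ρ²`; summing the geometric series gives the theorem with `C = 9/2`.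

The bound goes by induction on `n`. In one Duhamel step (`duhamel_step`), Young's inequality splits
the integrand `e^{M(r-s)} p(r-s) p(t-r) · e^{G(r)/a} |ρ|` into two squares.
* The square of the first factor integrates explicitly in space (`lintegral_heatK_sq`): it is
  `p(t-s, x-y)²` times a kernel in `r` with inverse-square-root singularities at `s` and `t`. Its
  integral in time against `e^{2M(r-s)}` is at most `e^{2M(t-s)} · 3 / (2√(2M))`
  (`time_integral_le`).
* The square of the second factor integrates to `∫ e^{2G/a} G' dr ≤ (a/2) e^{2G(t)/a}`
  (`growth_integral_le`).

With `√(2M) = 3a` the two losses multiply to `1/4`, so each step costs a factor `1/2`. The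
exponential weights take the place of the factorials and Dirichlet integrals that arise when
Cauchy-Schwarz is applied to the whole `n`-fold simplex integral.
-/

open MeasureTheory Real Filter

/-- Heat kernel `p(t,x) = (2πt)^{-1/2} exp(-x²/(2t))`. -/
noncomputable def heatK (t x : ℝ) : ℝ :=
  (Real.sqrt (2 * Real.pi * t))⁻¹ * Real.exp (-(x ^ 2) / (2 * t))

/-- The `n`-th term of the Duhamel series defining the kernel `P(ρ; (s,x) → (t,y))`. -/
noncomputable def kernelTerm (ρ : ℝ → ℝ → ℝ) (s x : ℝ) : ℕ → ℝ → ℝ → ℝ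
  | 0, t, y => heatK (t - s) (x - y)
  | n + 1, t, y =>
      ∫ r in Set.Ioo s t, ∫ z : ℝ, kernelTerm ρ s x n r z * ρ r z * heatK (t - r) (y - z)

/-- The kernel `P(ρ; (s,x) → (t,y))`, given by the absolutely convergent Duhamel series. -/
noncomputable def kerP (ρ : ℝ → ℝ → ℝ) (s x t y : ℝ) : ℝ := ∑' n : ℕ, kernelTerm ρ s x n t y

/-- `Z(ρ; t, x) := P(ρ; (0,0) → (t,x))`, the solution of `∂_t Z = ½ ∂_{xx} Z + ρ Z`
with Dirac-delta initial data. -/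
noncomputable def Zsol (ρ : ℝ → ℝ → ℝ) (t x : ℝ) : ℝ := kerP ρ 0 0 t x

/-- `ρ ∈ L²([a,b] × ℝ)`. -/
def InL2 (ρ : ℝ → ℝ → ℝ) (a b : ℝ) : Prop :=
  MeasureTheory.Integrable (fun q : ℝ × ℝ => (ρ q.1 q.2) ^ 2)
    (MeasureTheory.volume.restrict (Set.Icc a b ×ˢ Set.univ))

/-- The squared `L²` norm `‖ρ‖²_{L²([a,b] × ℝ)}`. -/
noncomputable def l2sq (ρ : ℝ → ℝ → ℝ) (a b : ℝ) : ℝ :=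
  ∫ q in Set.Icc a b ×ˢ (Set.univ : Set ℝ), (ρ q.1 q.2) ^ 2

/-! ### Gaussian identities and the two time integrals -/

lemma heatK_nonneg (t x : ℝ) : 0 ≤ heatK t x := by unfold heatK; positivity

lemma heatK_pos {t : ℝ} (ht : 0 < t) (x : ℝ) : 0 < heatK t x := by unfold heatK; positivity

lemma heatK_sub_comm (t x y : ℝ) : heatK t (x - y) = heatK t (y - x) := by
  unfold heatK; rw [show (x - y) ^ 2 = (y - x) ^ 2 by ring]

lemma heatK_sq {t : ℝ} (ht : 0 < t) (x : ℝ) :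
    heatK t x ^ 2 = (2 * π * t)⁻¹ * Real.exp (-(x ^ 2) / t) := by
  unfold heatK
  rw [mul_pow, inv_pow, Real.sq_sqrt (by positivity), ← Real.exp_nat_mul]
  congr 2
  field_simp
  push_cast
  ring

/-- The product of two squared heat kernels integrates explicitly: completing the square in `z`
about the bridge mean `m` leaves a Gaussian of variance `uv / (2(u + v))`, and the square of the
heat kernel at time `u + v` factors out. -/
lemma lintegral_heatK_sq {u v : ℝ} (hu : 0 < u) (hv : 0 < v) (x y : ℝ) :
    ∫⁻ z : ℝ, ENNReal.ofReal ((heatK u (z - y) * heatK v (x - z)) ^ 2) =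
      ENNReal.ofReal (heatK (u + v) (x - y) ^ 2 * (1 / 2 * √((u + v) / (π * u * v)))) := by
  have huv : 0 < u + v := by positivity
  have hb : 0 < (u + v) / (u * v) := by positivity
  -- The mean of the Brownian bridge from `y` to `x` at the intermediate time.
  set m : ℝ := (v * y + u * x) / (u + v) with hm
  have key : ∀ z, (heatK u (z - y) * heatK v (x - z)) ^ 2 =
      heatK (u + v) (x - y) ^ 2 * ((u + v) / (2 * π * u * v)) *
        Real.exp (-((u + v) / (u * v)) * (z - m) ^ 2) := by
    intro z
    rw [mul_pow, heatK_sq hu, heatK_sq hv, heatK_sq huv]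
    have e : Real.exp (-((z - y) ^ 2) / u) * Real.exp (-((x - z) ^ 2) / v) =
        Real.exp (-((x - y) ^ 2) / (u + v)) *
          Real.exp (-((u + v) / (u * v)) * (z - m) ^ 2) := by
      rw [← Real.exp_add, ← Real.exp_add, hm]
      congr 1
      field_simp
      ring
    calc _ = (2 * π * u)⁻¹ * (2 * π * v)⁻¹ *
          (Real.exp (-((z - y) ^ 2) / u) * Real.exp (-((x - z) ^ 2) / v)) := by ring
      _ = _ := by rw [e]; field_simp
  have hint : Integrable fun z : ℝ => Real.exp (-((u + v) / (u * v)) * (z - m) ^ 2) :=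
    (integrable_exp_neg_mul_sq hb).comp_sub_right m
  simp_rw [key]
  rw [← ofReal_integral_eq_lintegral_ofReal (hint.const_mul _)
    (Eventually.of_forall fun z => by positivity), integral_const_mul,
    integral_sub_right_eq_self (fun z : ℝ => Real.exp (-((u + v) / (u * v)) * z ^ 2)),
    integral_gaussian]
  congr 1
  have h1 : π / ((u + v) / (u * v)) = π ^ 2 * (u * v / (u + v)) ^ 2 * ((u + v) / (π * u * v)) := by
    field_simp
  rw [h1, Real.sqrt_mul (by positivity), ← mul_pow, Real.sqrt_sq (by positivity)]
  field_simp

/-- A Gamma integral, written over all of `ℝ`: since `(√v)⁻¹ = 0` for `v ≤ 0`, the negative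
half-line contributes nothing. -/
lemma lintegral_rpow_exp {c : ℝ} (hc : 0 < c) :
    ∫⁻ v : ℝ, ENNReal.ofReal ((√v)⁻¹ * Real.exp (-(c * v))) = ENNReal.ofReal √(π / c) := by
  have h := Real.integral_rpow_mul_exp_neg_mul_Ioi (a := 1 / 2) (r := c) (by norm_num) hc
  have e : Set.EqOn (fun t : ℝ => t ^ ((1 : ℝ) / 2 - 1) * Real.exp (-(c * t)))
      (fun v => (√v)⁻¹ * Real.exp (-(c * v))) (Set.Ioi 0) := by
    intro v hv
    have hv' : (0 : ℝ) < v := hv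
    simp only
    rw [Real.sqrt_eq_rpow, ← Real.rpow_neg hv'.le]
    norm_num
  have hval : (1 / c) ^ ((1 : ℝ) / 2) * Real.Gamma (1 / 2) = √(π / c) := by
    rw [Real.Gamma_one_half_eq, ← Real.sqrt_eq_rpow, ← Real.sqrt_mul (by positivity)]
    congr 1; ring
  rw [hval, setIntegral_congr_fun measurableSet_Ioi e] at h
  have hint : IntegrableOn (fun v : ℝ => (√v)⁻¹ * Real.exp (-(c * v))) (Set.Ioi 0) := by
    refine Integrable.of_integral_ne_zero ?_
    rw [h]; positivity
  rw [← h, ofReal_integral_eq_lintegral_ofReal hint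
    (Eventually.of_forall fun z => by positivity), ← lintegral_indicator measurableSet_Ioi]
  congr 1
  ext v
  by_cases hv : v ∈ Set.Ioi (0 : ℝ)
  · simp [hv]
  · have : √v = 0 := Real.sqrt_eq_zero_of_nonpos (by simpa using hv)
    rw [Set.indicator_of_notMem hv, this]
    simp

/-- Separates the two endpoint singularities of the bridge kernel, using
`(u + v) / (uv) = 1/u + 1/v`. The mismatched product `exp(-cv) / √u` is dominated by
`exp(-cu) / √u` when `u ≤ v` and by `exp(-cv) / √v` otherwise. -/
lemma sqrt_kernel_le {c u v : ℝ} (hc : 0 < c) (hu : 0 < u) (hv : 0 < v) :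
    Real.exp (c * u) * (1 / 2 * √((u + v) / (π * u * v))) ≤
      Real.exp (c * (u + v)) * (2 * √π)⁻¹ *
        ((√u)⁻¹ * Real.exp (-(c * u)) + 2 * ((√v)⁻¹ * Real.exp (-(c * v)))) := by
  have h1 : √((u + v) / (π * u * v)) ≤ (√π)⁻¹ * ((√u)⁻¹ + (√v)⁻¹) := by
    rw [Real.sqrt_le_left (by positivity)]
    have : ((√π)⁻¹ * ((√u)⁻¹ + (√v)⁻¹)) ^ 2
        = π⁻¹ * (u⁻¹ + v⁻¹) + 2 * (√π)⁻¹ ^ 2 * (√u)⁻¹ * (√v)⁻¹ := by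
      have := Real.sq_sqrt pi_pos.le
      have := Real.sq_sqrt hu.le
      have := Real.sq_sqrt hv.le
      rw [mul_pow, add_sq]
      simp only [inv_pow, *]
      ring
    rw [this]
    have h2 : (u + v) / (π * u * v) = π⁻¹ * (u⁻¹ + v⁻¹) := by field_simp; ring
    rw [h2]
    have : 0 ≤ 2 * (√π)⁻¹ ^ 2 * (√u)⁻¹ * (√v)⁻¹ := by positivity
    linarith
  have h2 : Real.exp (-(c * v)) * (√u)⁻¹ ≤
      (√u)⁻¹ * Real.exp (-(c * u)) + (√v)⁻¹ * Real.exp (-(c * v)) := by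
    rcases le_total u v with h | h
    · have : Real.exp (-(c * v)) ≤ Real.exp (-(c * u)) := by gcongr
      have : Real.exp (-(c * v)) * (√u)⁻¹ ≤ Real.exp (-(c * u)) * (√u)⁻¹ := by gcongr
      have : 0 ≤ (√v)⁻¹ * Real.exp (-(c * v)) := by positivity
      linarith
    · have : (√u)⁻¹ ≤ (√v)⁻¹ := by gcongr
      have : Real.exp (-(c * v)) * (√u)⁻¹ ≤ Real.exp (-(c * v)) * (√v)⁻¹ := by gcongr
      have : 0 ≤ (√u)⁻¹ * Real.exp (-(c * u)) := by positivity
      linarith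
  have h3 : Real.exp (c * u) = Real.exp (c * (u + v)) * Real.exp (-(c * v)) := by
    rw [← Real.exp_add]; congr 1; ring
  calc _ ≤ Real.exp (c * u) * (1 / 2 * ((√π)⁻¹ * ((√u)⁻¹ + (√v)⁻¹))) := by gcongr
    _ = Real.exp (c * (u + v)) * (2 * √π)⁻¹ *
        (Real.exp (-(c * v)) * (√u)⁻¹ + (√v)⁻¹ * Real.exp (-(c * v))) := by
      rw [h3]; field_simp
    _ ≤ Real.exp (c * (u + v)) * (2 * √π)⁻¹ *
        (((√u)⁻¹ * Real.exp (-(c * u)) + (√v)⁻¹ * Real.exp (-(c * v)))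
          + (√v)⁻¹ * Real.exp (-(c * v))) := by gcongr
    _ = _ := by ring

/-- The exponential weight of rate `c` gains a factor `c^{-1/2}` over the bridge kernel, uniformly
in the length of the time interval. -/
lemma time_integral_le {c s t : ℝ} (hc : 0 < c) :
    ∫⁻ r in Set.Ioo s t, ENNReal.ofReal
        (Real.exp (c * (r - s)) * (1 / 2 * √((t - s) / (π * (r - s) * (t - r))))) ≤
      ENNReal.ofReal (Real.exp (c * (t - s)) * (3 / (2 * √c))) := by
  set φ : ℝ → ℝ := fun v => (√v)⁻¹ * Real.exp (-(c * v)) with hφ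
  have hφ0 : ∀ v, 0 ≤ φ v := fun v => by simp only [hφ]; positivity
  have hφm : Measurable fun v => ENNReal.ofReal (φ v) := by simp only [hφ]; fun_prop
  set K : ℝ := Real.exp (c * (t - s)) * (2 * √π)⁻¹ with hK
  have hK0 : 0 ≤ K := by positivity
  calc _ ≤ ∫⁻ r in Set.Ioo s t, ENNReal.ofReal K *
        (ENNReal.ofReal (φ (r - s)) + 2 * ENNReal.ofReal (φ (t - r))) := by
        refine setLIntegral_mono' measurableSet_Ioo fun r hr => ?_
        have := sqrt_kernel_le hc (sub_pos.2 hr.1) (sub_pos.2 hr.2)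
        rw [show r - s + (t - r) = t - s by ring] at this
        rw [← ENNReal.ofReal_ofNat 2, ← ENNReal.ofReal_mul (by norm_num),
          ← ENNReal.ofReal_add (hφ0 _) (mul_nonneg (by norm_num) (hφ0 _)),
          ← ENNReal.ofReal_mul hK0]
        exact ENNReal.ofReal_le_ofReal this
    _ ≤ ∫⁻ r, ENNReal.ofReal K *
        (ENNReal.ofReal (φ (r - s)) + 2 * ENNReal.ofReal (φ (t - r))) :=
        setLIntegral_le_lintegral _ _
    _ = ENNReal.ofReal K * (ENNReal.ofReal √(π / c) + 2 * ENNReal.ofReal √(π / c)) := by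
        rw [lintegral_const_mul' _ _ ENNReal.ofReal_ne_top,
          lintegral_add_left (f := fun r => ENNReal.ofReal (φ (r - s)))
            (hφm.comp (measurable_id.sub_const s)),
          lintegral_const_mul' _ _ (by simp),
          lintegral_sub_right_eq_self (fun v => ENNReal.ofReal (φ v)) s,
          lintegral_sub_left_eq_self (fun v => ENNReal.ofReal (φ v)) t, lintegral_rpow_exp hc]
    _ = _ := by
        rw [← ENNReal.ofReal_ofNat 2, ← ENNReal.ofReal_mul (by norm_num),
          ← ENNReal.ofReal_add (by positivity) (by positivity), ← ENNReal.ofReal_mul hK0]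
        congr 1
        rw [hK, Real.sqrt_div pi_pos.le]
        field_simp
        ring

/-- The integral of `exp(kG) G'` is at most `exp(kG(t)) / k` for `G = ∫ h`, with `h` merely
integrable. Lebesgue differentiation identifies the derivative of `exp(kG)` almost everywhere, and
the integral of the derivative of a monotone function is at most its increment. -/
lemma growth_integral_le {h : ℝ → ℝ} {s t k : ℝ} (hst : s ≤ t) (hk : 0 < k)
    (h0 : ∀ r, 0 ≤ h r) (hint : IntervalIntegrable h volume s t) :
    ∫⁻ r in Set.Ioo s t, ENNReal.ofReal (Real.exp (k * ∫ u in s..r, h u) * h r) ≤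
      ENNReal.ofReal (Real.exp (k * ∫ u in s..t, h u) / k) := by
  set F : ℝ → ℝ := fun r => Real.exp (k * ∫ u in s..r, h u) with hF
  have hmono : MonotoneOn F (Set.uIcc s t) := by
    rw [Set.uIcc_of_le hst]
    intro a ha b hb hab
    simp only [hF]
    gcongr
    exact intervalIntegral.integral_mono_interval le_rfl ha.1 hab (Eventually.of_forall h0)
      (hint.mono_set (by
        rw [Set.uIcc_of_le hst, Set.uIcc_of_le hb.1]; exact Set.Icc_subset_Icc_right hb.2))
  -- Only this inequality is used, so absolute continuity of `F` never has to be established.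
  have hle : ∫ x in s..t, deriv F x ≤ F t - F s := by
    have h1 := hmono.intervalIntegral_deriv_mem_uIcc
    have h2 : F s ≤ F t := hmono (by simp) (by simp) hst
    rw [Set.uIcc_of_le (by linarith)] at h1
    exact h1.2
  have hd : ∀ᵐ r, r ∈ Set.Ioo s t → deriv F r = k * (F r * h r) := by
    filter_upwards [hint.ae_hasDerivAt_integral] with r hr hrm
    have h1 := hr (by rw [Set.uIcc_of_le hst]; exact Set.Ioo_subset_Icc_self hrm) s (by simp)
    have h2 := (h1.const_mul k).exp
    rw [h2.deriv]; simp only [hF]; ring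
  have hF0 : ∀ r, 0 ≤ F r := fun r => (Real.exp_pos _).le
  have hdint : IntegrableOn (deriv F) (Set.Ioo s t) :=
    ((intervalIntegrable_iff_integrableOn_Ioo_of_le hst).1 hmono.intervalIntegrable_deriv)
  have hd' : deriv F =ᵐ[volume.restrict (Set.Ioo s t)] fun r => k * (F r * h r) :=
    (ae_restrict_iff' measurableSet_Ioo).2 hd
  calc _ = ∫⁻ r in Set.Ioo s t, ENNReal.ofReal k⁻¹ * ENNReal.ofReal (deriv F r) := by
        refine lintegral_congr_ae ?_
        filter_upwards [hd'] with r hr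
        rw [hr, ← ENNReal.ofReal_mul (by positivity)]
        congr 1
        rw [inv_mul_cancel_left₀ hk.ne']
    _ = ENNReal.ofReal k⁻¹ * ENNReal.ofReal (∫ r in Set.Ioo s t, deriv F r) := by
        rw [lintegral_const_mul' _ _ ENNReal.ofReal_ne_top,
          ofReal_integral_eq_lintegral_ofReal hdint]
        filter_upwards [hd'] with r hr
        rw [hr]
        exact mul_nonneg hk.le (mul_nonneg (hF0 r) (h0 r))
    _ ≤ _ := by
        rw [← ENNReal.ofReal_mul (by positivity), ← integral_Ioc_eq_integral_Ioo,
          ← intervalIntegral.integral_of_le hst, div_eq_inv_mul]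
        refine ENNReal.ofReal_le_ofReal ?_
        have := hF0 s
        gcongr
        linarith

/-! ### The Duhamel iteration -/

/-- One Duhamel integration halves the constant in a bound by the weighted heat kernel. The two
squares produced by Young's inequality are estimated by `time_integral_le` with rate `9a²` and
`growth_integral_le` with rate `2/a`; the number `9/2` makes the product of the two losses `1/4`.
The integrals are estimated as lower Lebesgue integrals of absolute values, so no measurability of
`f` or of the sign of `ρ` is needed. -/
lemma duhamel_step {s t a q x y : ℝ} {ρ f : ℝ → ℝ → ℝ} {h : ℝ → ℝ} (hst : s < t) (ha : 0 < a)
    (hq : 0 ≤ q) (h0 : ∀ r, 0 ≤ h r) (hint : IntervalIntegrable h volume s t)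
    (hh : ∀ᵐ r, r ∈ Set.Ioo s t → ∫⁻ z, ENNReal.ofReal (ρ r z ^ 2) = ENNReal.ofReal (h r))
    (hf : ∀ r ∈ Set.Ioo s t, ∀ z, |f r z| ≤ q * (Real.exp (9 / 2 * a ^ 2 * (r - s)) *
      Real.exp (a⁻¹ * ∫ u in s..r, h u) * heatK (r - s) (z - y))) :
    |∫ r in Set.Ioo s t, ∫ z : ℝ, f r z * ρ r z * heatK (t - r) (x - z)| ≤
      q / 2 * (Real.exp (9 / 2 * a ^ 2 * (t - s)) *
        Real.exp (a⁻¹ * ∫ u in s..t, h u) * heatK (t - s) (x - y)) := by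
  have hT : 0 < t - s := sub_pos.2 hst
  set E : ℝ := Real.exp (9 / 2 * a ^ 2 * (t - s)) * heatK (t - s) (x - y) with hE
  set K : ℝ := Real.exp (a⁻¹ * ∫ u in s..t, h u) with hK
  have hE0 : 0 < E := mul_pos (Real.exp_pos _) (heatK_pos hT _)
  have hK0 : 0 < K := Real.exp_pos _
  set l : ℝ := a * K / E with hl
  have hl0 : 0 < l := by positivity
  set A : ℝ → ℝ := fun r => Real.exp (9 * a ^ 2 * (r - s)) with hA
  set D : ℝ → ℝ := fun r => Real.exp (2 / a * ∫ u in s..r, h u) with hD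
  have hA0 : ∀ r, 0 ≤ A r := fun r => (Real.exp_pos _).le
  have hD0 : ∀ r, 0 ≤ D r := fun r => (Real.exp_pos _).le
  set P : ℝ → ℝ → ℝ := fun r z => heatK (r - s) (z - y) * heatK (t - r) (x - z) with hP
  have hPm : ∀ r, Measurable fun z => ENNReal.ofReal (P r z ^ 2) := by
    intro r
    simp only [hP, heatK]
    fun_prop
  -- Young's inequality; the weight `l` is such that each square contributes at most `q E K / 4`.
  have hpt : ∀ r ∈ Set.Ioo s t, ∀ z, |f r z * ρ r z * heatK (t - r) (x - z)| ≤
      q / 2 * l * A r * P r z ^ 2 + q / 2 * l⁻¹ * D r * ρ r z ^ 2 := by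
    intro r hr z
    have hp := heatK_nonneg (t - r) (x - z)
    set e₁ := Real.exp (9 / 2 * a ^ 2 * (r - s)) with he₁
    set e₂ := Real.exp (a⁻¹ * ∫ u in s..r, h u) with he₂
    have hA' : A r = e₁ ^ 2 := by
      simp only [hA, he₁]; rw [← Real.exp_nat_mul]; congr 1; push_cast; ring
    have hD' : D r = e₂ ^ 2 := by
      simp only [hD, he₂]; rw [← Real.exp_nat_mul]; congr 1; push_cast; ring
    have h1 : |f r z * ρ r z * heatK (t - r) (x - z)| ≤ q * ((e₁ * P r z) * (e₂ * |ρ r z|)) := by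
      rw [abs_mul, abs_mul, abs_of_nonneg hp]
      calc _ ≤ q * (e₁ * e₂ * heatK (r - s) (z - y)) * |ρ r z| * heatK (t - r) (x - z) := by
            gcongr
            exact hf r hr z
        _ = _ := by simp only [hP]; ring
    refine h1.trans ?_
    have h2 : (e₁ * P r z) * (e₂ * |ρ r z|) ≤
        (l * (e₁ * P r z) ^ 2 + l⁻¹ * (e₂ * |ρ r z|) ^ 2) / 2 := by
      have h3 := mul_nonneg hl0.le (sq_nonneg (e₁ * P r z - l⁻¹ * (e₂ * |ρ r z|)))
      have h4 : l * (e₁ * P r z - l⁻¹ * (e₂ * |ρ r z|)) ^ 2 =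
          l * (e₁ * P r z) ^ 2 + l⁻¹ * (e₂ * |ρ r z|) ^ 2
            - 2 * ((e₁ * P r z) * (e₂ * |ρ r z|)) := by
        field_simp
        ring
      linarith
    calc _ ≤ q * ((l * (e₁ * P r z) ^ 2 + l⁻¹ * (e₂ * |ρ r z|) ^ 2) / 2) := by gcongr
      _ = _ := by rw [hA', hD', mul_pow e₁, mul_pow e₂, sq_abs]; ring
  have hinner : ∀ᵐ r, r ∈ Set.Ioo s t →
      ∫⁻ z, ‖f r z * ρ r z * heatK (t - r) (x - z)‖ₑ ≤
        ENNReal.ofReal (q / 2 * l * heatK (t - s) (x - y) ^ 2) *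
          ENNReal.ofReal (A r * (1 / 2 * √((t - s) / (π * (r - s) * (t - r))))) +
        ENNReal.ofReal (q / 2 * l⁻¹) * ENNReal.ofReal (D r * h r) := by
    filter_upwards [hh] with r hr hrm
    calc _ ≤ ∫⁻ z, (ENNReal.ofReal (q / 2 * l * A r) * ENNReal.ofReal (P r z ^ 2) +
          ENNReal.ofReal (q / 2 * l⁻¹ * D r) * ENNReal.ofReal (ρ r z ^ 2)) := by
          refine lintegral_mono fun z => ?_
          have := hA0 r
          have := hD0 r
          rw [← ENNReal.ofReal_mul (by positivity), ← ENNReal.ofReal_mul (by positivity),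
            ← ENNReal.ofReal_add (by positivity) (by positivity), Real.enorm_eq_ofReal_abs]
          exact ENNReal.ofReal_le_ofReal (hpt r hrm z)
      _ = _ := by
          have := hA0 r
          have := hD0 r
          rw [lintegral_add_left ((hPm r).const_mul _),
            lintegral_const_mul' _ _ ENNReal.ofReal_ne_top,
            lintegral_const_mul' _ _ ENNReal.ofReal_ne_top, hr hrm,
            lintegral_heatK_sq (sub_pos.2 hrm.1) (sub_pos.2 hrm.2),
            show r - s + (t - r) = t - s by ring,
            ← ENNReal.ofReal_mul (by positivity), ← ENNReal.ofReal_mul (by positivity),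
            ← ENNReal.ofReal_mul (by positivity), ← ENNReal.ofReal_mul (by positivity)]
          congr 2 <;> ring
  have hKK : Real.exp (2 / a * ∫ u in s..t, h u) = K ^ 2 := by
    rw [hK, ← Real.exp_nat_mul]; congr 1; push_cast; ring
  have hEE : Real.exp (9 * a ^ 2 * (t - s)) * heatK (t - s) (x - y) ^ 2 = E ^ 2 := by
    rw [hE, mul_pow, ← Real.exp_nat_mul]; congr 2; push_cast; ring
  have hsq : √(9 * a ^ 2) = 3 * a := by
    rw [show 9 * a ^ 2 = (3 * a) ^ 2 by ring, Real.sqrt_sq (by positivity)]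
  have htotal : ‖∫ r in Set.Ioo s t, ∫ z : ℝ, f r z * ρ r z * heatK (t - r) (x - z)‖ₑ ≤
      ENNReal.ofReal (q / 2 * (E * K)) := by
    calc _ ≤ ∫⁻ r in Set.Ioo s t, ∫⁻ z, ‖f r z * ρ r z * heatK (t - r) (x - z)‖ₑ :=
          (enorm_integral_le_lintegral_enorm _).trans
            (lintegral_mono fun r => enorm_integral_le_lintegral_enorm _)
      _ ≤ ∫⁻ r in Set.Ioo s t, (ENNReal.ofReal (q / 2 * l * heatK (t - s) (x - y) ^ 2) *
          ENNReal.ofReal (A r * (1 / 2 * √((t - s) / (π * (r - s) * (t - r))))) +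
        ENNReal.ofReal (q / 2 * l⁻¹) * ENNReal.ofReal (D r * h r)) :=
          lintegral_mono_ae ((ae_restrict_iff' measurableSet_Ioo).2 hinner)
      _ ≤ ENNReal.ofReal (q / 2 * l * heatK (t - s) (x - y) ^ 2) *
            ENNReal.ofReal (Real.exp (9 * a ^ 2 * (t - s)) * (3 / (2 * √(9 * a ^ 2)))) +
          ENNReal.ofReal (q / 2 * l⁻¹) *
            ENNReal.ofReal (Real.exp (2 / a * ∫ u in s..t, h u) / (2 / a)) := by
          rw [lintegral_add_left (by simp only [hA]; fun_prop),
            lintegral_const_mul' _ _ ENNReal.ofReal_ne_top,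
            lintegral_const_mul' _ _ ENNReal.ofReal_ne_top]
          gcongr
          · exact time_integral_le (by positivity)
          · exact growth_integral_le hst.le (by positivity) h0 hint
      _ = _ := by
          rw [← ENNReal.ofReal_mul (by positivity), ← ENNReal.ofReal_mul (by positivity),
            ← ENNReal.ofReal_add (by positivity) (by positivity), hKK, hsq]
          congr 1
          calc _ = q / 2 * l * (Real.exp (9 * a ^ 2 * (t - s)) * heatK (t - s) (x - y) ^ 2) *
                (3 / (2 * (3 * a))) + q / 2 * l⁻¹ * (K ^ 2 / (2 / a)) := by ring
            _ = _ := by rw [hEE, hl]; field_simp; ring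
  rw [Real.enorm_eq_ofReal_abs, ENNReal.ofReal_le_ofReal_iff (by positivity)] at htotal
  calc _ ≤ _ := htotal
    _ = _ := by rw [hE]; ring

lemma kernelTerm_bound {s t a y : ℝ} {ρ : ℝ → ℝ → ℝ} {h : ℝ → ℝ} (ha : 0 < a)
    (h0 : ∀ r, 0 ≤ h r) (hint : IntervalIntegrable h volume s t)
    (hh : ∀ᵐ r, r ∈ Set.Ioo s t → ∫⁻ z, ENNReal.ofReal (ρ r z ^ 2) = ENNReal.ofReal (h r))
    (n : ℕ) : ∀ r ∈ Set.Ioc s t, ∀ x, |kernelTerm ρ s y n r x| ≤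
      (1 / 2) ^ n * (Real.exp (9 / 2 * a ^ 2 * (r - s)) *
        Real.exp (a⁻¹ * ∫ u in s..r, h u) * heatK (r - s) (x - y)) := by
  induction n with
  | zero =>
    intro r hr x
    have hG : 0 ≤ ∫ u in s..r, h u :=
      intervalIntegral.integral_nonneg hr.1.le fun u _ => h0 u
    have hrs : 0 ≤ r - s := (sub_pos.2 hr.1).le
    have h1 : 1 ≤ Real.exp (9 / 2 * a ^ 2 * (r - s)) := Real.one_le_exp (by positivity)
    have h2 : 1 ≤ Real.exp (a⁻¹ * ∫ u in s..r, h u) := Real.one_le_exp (by positivity)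
    rw [kernelTerm, abs_of_nonneg (heatK_nonneg _ _), heatK_sub_comm, pow_zero, one_mul]
    exact le_mul_of_one_le_left (heatK_nonneg _ _) (one_le_mul_of_one_le_of_one_le h1 h2)
  | succ n ih =>
    intro r hr x
    rw [kernelTerm, pow_succ, ← div_eq_mul_one_div]
    refine duhamel_step hr.1 ha (by positivity) h0 ?_ ?_ fun r' hr' z => ?_
    · exact hint.mono_set (by
        rw [Set.uIcc_of_le hr.1.le, Set.uIcc_of_le (hr.1.le.trans hr.2)]
        exact Set.Icc_subset_Icc_right hr.2)
    · filter_upwards [hh] with r' hr' hm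
      exact hr' ⟨hm.1, hm.2.trans_le hr.2⟩
    · exact ih r' ⟨hr'.1, hr'.2.le.trans hr.2⟩ z

/-- Fubini for `ρ²`: the slice energy `h r = ∫ ρ(r,z)² dz` is integrable in time with total mass
`‖ρ‖²`, and for almost every `r` the slice is genuinely square integrable, so that `h r` is not
the junk value of a divergent integral. -/
lemma slice_energy {s t : ℝ} {ρ : ℝ → ℝ → ℝ} (hst : s ≤ t) (hρ : InL2 ρ s t) :
    IntervalIntegrable (fun r => ∫ z, ρ r z ^ 2) volume s t ∧
    (∀ᵐ r, r ∈ Set.Ioo s t →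
      ∫⁻ z, ENNReal.ofReal (ρ r z ^ 2) = ENNReal.ofReal (∫ z, ρ r z ^ 2)) ∧
    ∫ r in s..t, ∫ z, ρ r z ^ 2 = l2sq ρ s t := by
  have hm : (volume : Measure (ℝ × ℝ)).restrict (Set.Icc s t ×ˢ Set.univ) =
      ((volume : Measure ℝ).restrict (Set.Icc s t)).prod volume := by
    rw [Measure.volume_eq_prod, ← Measure.prod_restrict, Measure.restrict_univ]
  unfold InL2 at hρ
  rw [hm] at hρ
  refine ⟨?_, ?_, ?_⟩
  · rw [intervalIntegrable_iff_integrableOn_Icc_of_le hst]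
    exact hρ.integral_prod_left
  · have h1 := (ae_restrict_iff' measurableSet_Icc).1 hρ.prod_right_ae
    filter_upwards [h1] with r hr hrm
    exact (ofReal_integral_eq_lintegral_ofReal (hr (Set.Ioo_subset_Icc_self hrm))
      (Eventually.of_forall fun z => sq_nonneg _)).symm
  · rw [l2sq, hm, integral_prod _ hρ, intervalIntegral.integral_of_le hst,
      integral_Icc_eq_integral_Ioc]

/-- Pointwise bound on the kernel in terms of the heat kernel. -/
theorem kernel_pointwise_bound :
    ∃ C : ℝ, 0 < C ∧ ∀ (s t a : ℝ) (ρ : ℝ → ℝ → ℝ),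
      0 ≤ s → s < t → 0 < a → InL2 ρ s t → ∀ x y : ℝ,
      |kerP ρ s y t x| ≤
        C * Real.exp (a ^ 2 * C * (t - s) + a⁻¹ * l2sq ρ s t) * heatK (t - s) (x - y) := by
  refine ⟨9 / 2, by norm_num, fun s t a ρ _ hst ha hρ x y => ?_⟩
  obtain ⟨hint, hh, htot⟩ := slice_energy hst.le hρ
  have hb := fun n => kernelTerm_bound (y := y) ha
    (fun r => integral_nonneg fun z => sq_nonneg (ρ r z)) hint hh n t ⟨hst, le_rfl⟩ x
  -- This bound on the `tsum` also covers the value `0` given to a non-summable series.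
  have hsum := tsum_of_norm_bounded (f := fun n => kernelTerm ρ s y n t x)
    (hasSum_geometric_two.mul_right _) hb
  rw [htot] at hsum
  have hp := heatK_nonneg (t - s) (x - y)
  calc |kerP ρ s y t x| ≤ _ := hsum
    _ = 2 * Real.exp (a ^ 2 * (9 / 2) * (t - s) + a⁻¹ * l2sq ρ s t) * heatK (t - s) (x - y) := by
      rw [← Real.exp_add]; ring_nf
    _ ≤ _ := by gcongr; norm_num
end

section
/- Fix 0 ≤ s < t and M ≥ 0. There exists a constant C(M, t, s) such that for all ρ₁, ρ₂ ∈ L²([s,t]×ℝ) with 0 ≤ ρ₁ ≤ M and 0 ≤ ρ₂ ≤ M almost everywhere, one has | ∫_s^t F(ρ₁(r,·)) dr − ∫_s^t F(ρ₂(r,·)) dr | ≤ C(M, t, s) ‖ρ₁ − ρ₂‖_{L²([s,t]×ℝ)}. -/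
/-!
The functional `F` is a supremum of the energies `E_φ(g) = ∫ φ g² - ½ (g')²` over normalized `g`.
Two facts about these energies give the theorem.

* `Admissible.sq_le`: a normalized `g` satisfies `g² ≤ 1 + ∫ (g')²` pointwise.  For `0 ≤ φ ≤ M` the
  value `F(φ)` is bounded below by a constant `-K`, so only those `g` with `E_φ(g) ≥ -K` matter,
  and these are bounded by a constant `B` depending on `M` alone.  For such `g` the inequality
  `a g² ≤ a² / (2 lam) + lam g⁴ / 2` gives
  `F(φ₁) - F(φ₂) ≤ ‖φ₁ - φ₂‖² / (2 lam) + lam B / 2` for every `lam > 0`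
  (`Ffun_le_add`).  Integrating over `[s, t]` and optimizing over `lam` gives the Lipschitz bound.

* Integrating requires `r ↦ F(ρ(r, ·))` to be measurable, although `F` is an uncountable supremum.
  The energy depends on `g` only through `(g², (g')²) ∈ L¹ × L¹`, and does so continuously; since
  `L¹ × L¹` is separable, a single sequence of normalized functions computes `F(φ)` for all `φ`
  with `0 ≤ φ ≤ M` (`exists_seq_Ffun_eq_iSup`), and Fubini's theorem gives measurability.
-/

open MeasureTheory Real Filter

/-- The ground-state energy functional
`F(φ) = sup { ∫ φ g² − ½ (g')² : ‖g‖_{L²} = 1, g, g' ∈ L² }`. -/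
noncomputable def Ffun (φ : ℝ → ℝ) : ℝ :=
  sSup { c : ℝ | ∃ g g' : ℝ → ℝ,
    (∀ x, HasDerivAt g (g' x) x) ∧
    MeasureTheory.Integrable (fun x => g x ^ 2) ∧
    MeasureTheory.Integrable (fun x => g' x ^ 2) ∧
    (∫ x : ℝ, g x ^ 2) = 1 ∧
    c = ∫ x : ℝ, (φ x * g x ^ 2 - (1 / 2) * g' x ^ 2) }

/-- `g` is an `L²`-normalized function with derivative `g'`, both square integrable: a competitor
in the variational problem defining `Ffun`. -/
def Admissible (g g' : ℝ → ℝ) : Prop :=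
  (∀ x, HasDerivAt g (g' x) x) ∧ Integrable (fun x => g x ^ 2) ∧
    Integrable (fun x => g' x ^ 2) ∧ (∫ x : ℝ, g x ^ 2) = 1

/-- The energy `∫ φ g² - ½ (g')²`. -/
noncomputable def energy (φ g g' : ℝ → ℝ) : ℝ :=
  ∫ x : ℝ, (φ x * g x ^ 2 - (1 / 2) * g' x ^ 2)

/-- `φ` is (a.e.) measurable and takes values in `[0, M]` almost everywhere. -/
def BoundedPotential (M : ℝ) (φ : ℝ → ℝ) : Prop :=
  AEStronglyMeasurable φ volume ∧ ∀ᵐ x, 0 ≤ φ x ∧ φ x ≤ M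

/-! ### Normalized functions -/

/-- A normalized Gaussian is a competitor. -/
lemma exists_admissible : ∃ g g' : ℝ → ℝ, Admissible g g' := by
  obtain ⟨c, hc⟩ : ∃ c : ℝ, c ^ 2 * √π = 1 :=
    ⟨√((√π)⁻¹), by
      rw [Real.sq_sqrt (by positivity)]
      exact inv_mul_cancel₀ (by positivity)⟩
  have hsq : ∀ x : ℝ, (c * rexp (-x ^ 2 / 2)) ^ 2 = c ^ 2 * rexp (-1 * x ^ 2) := by
    intro x
    rw [mul_pow, ← Real.exp_nat_mul]
    congr 2
    push_cast
    ring
  refine ⟨fun x => c * rexp (-x ^ 2 / 2), fun x => -x * (c * rexp (-x ^ 2 / 2)), ?_, ?_, ?_, ?_⟩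
  · intro x
    have h1 : HasDerivAt (fun x : ℝ => -x ^ 2 / 2) (-x) x := by
      refine (((hasDerivAt_pow 2 x).neg).div_const 2).congr_deriv ?_
      norm_num
      ring
    refine (h1.exp.const_mul c).congr_deriv ?_
    ring
  · simp_rw [hsq]
    exact (integrable_exp_neg_mul_sq one_pos).const_mul _
  · have h := (integrable_rpow_mul_exp_neg_mul_sq (b := 1) one_pos (s := 2)
      (by norm_num)).const_mul (c ^ 2)
    refine h.congr (Eventually.of_forall fun x => ?_)
    simp only
    rw [mul_pow, hsq, Real.rpow_two]
    ring
  · simp_rw [hsq]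
    rw [integral_const_mul, integral_gaussian, div_one, hc]

/-- The one-dimensional Sobolev embedding `H¹ ⊆ L^∞`, from `g(x)² = ∫_{-∞}^x 2 g g'`. -/
lemma Admissible.sq_le {g g' : ℝ → ℝ} (h : Admissible g g') (x : ℝ) :
    g x ^ 2 ≤ 1 + ∫ y, g' y ^ 2 := by
  obtain ⟨hd, hg, hg', h1⟩ := h
  have hgc : Continuous g := continuous_iff_continuousAt.2 fun x => (hd x).continuousAt
  have hg'm : Measurable g' := by
    have : g' = deriv g := funext fun x => (hd x).deriv.symm
    rw [this]
    exact measurable_deriv g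
  have hsum : Integrable (fun y => g y ^ 2 + g' y ^ 2) := hg.add hg'
  have hprod : Integrable (fun y => 2 * g y * g' y) := by
    refine hsum.mono' (by fun_prop) (Eventually.of_forall fun y => ?_)
    rw [Real.norm_eq_abs, abs_le]
    constructor <;> nlinarith [sq_nonneg (g y + g' y), sq_nonneg (g y - g' y)]
  have hd2 : ∀ y ∈ Set.Iic x, HasDerivAt (fun y => g y ^ 2) (2 * g y * g' y) y := by
    intro y _
    simpa [Pi.pow_def] using (hd y).pow 2
  have hlim := tendsto_zero_of_hasDerivAt_of_integrableOn_Iic hd2 hprod.integrableOn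
    hg.integrableOn
  have hFTC := integral_Iic_of_hasDerivAt_of_tendsto' hd2 hprod.integrableOn hlim
  calc g x ^ 2 = ∫ y in Set.Iic x, 2 * g y * g' y := by rw [hFTC, sub_zero]
    _ ≤ ∫ y in Set.Iic x, (g y ^ 2 + g' y ^ 2) :=
        integral_mono hprod.integrableOn hsum.integrableOn fun y => by
          nlinarith [sq_nonneg (g y - g' y)]
    _ ≤ ∫ y, (g y ^ 2 + g' y ^ 2) :=
        setIntegral_le_integral hsum (Eventually.of_forall fun y => by positivity)
    _ = 1 + ∫ y, g' y ^ 2 := by rw [integral_add hg hg', h1]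

/-- Separability of `L¹ × L¹`, transported to the pairs `(g², (g')²)`. -/
lemma exists_seq_dense : ∃ G G' : ℕ → ℝ → ℝ, (∀ n, Admissible (G n) (G' n)) ∧
    ∀ g g', Admissible g g' → ∀ ε > 0, ∃ n,
      (∫ x, |g x ^ 2 - G n x ^ 2|) < ε ∧ (∫ x, |g' x ^ 2 - G' n x ^ 2|) < ε := by
  let A := {p : (ℝ → ℝ) × (ℝ → ℝ) // Admissible p.1 p.2}
  let ι : A → (ℝ →₁[volume] ℝ) × (ℝ →₁[volume] ℝ) := fun p =>
    (p.2.2.1.toL1 _, p.2.2.2.1.toL1 _)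
  obtain ⟨g₀, g₀', h₀⟩ := exists_admissible
  have : Nonempty (Set.range ι) := ⟨ι ⟨(g₀, g₀'), h₀⟩, Set.mem_range_self _⟩
  have : Fact ((1 : ENNReal) ≠ ⊤) := ⟨ENNReal.one_ne_top⟩
  have : SecondCountableTopology (ℝ →₁[volume] ℝ) := inferInstance
  obtain ⟨u, hu⟩ := TopologicalSpace.exists_dense_seq (Set.range ι)
  choose p hp using fun n => (u n).2
  refine ⟨fun n => (p n).1.1, fun n => (p n).1.2, fun n => (p n).2, ?_⟩
  intro g g' h ε hε
  obtain ⟨n, hn⟩ := Metric.denseRange_iff.1 hu ⟨ι ⟨(g, g'), h⟩, Set.mem_range_self _⟩ ε hε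
  have hdist : ∀ {a b : ℝ → ℝ} (ha : Integrable a) (hb : Integrable b),
      dist (ha.toL1 a) (hb.toL1 b) = ∫ x, |a x - b x| := by
    intro a b ha hb
    rw [dist_eq_norm, ← Integrable.toL1_sub, L1.norm_eq_integral_norm]
    refine integral_congr_ae ?_
    filter_upwards [(ha.sub hb).coeFn_toL1] with x hx
    rw [hx]
    rfl
  rw [Subtype.dist_eq, ← hp n, Prod.dist_eq, max_lt_iff] at hn
  refine ⟨n, ?_, ?_⟩
  · rw [← hdist h.2.1 (p n).2.2.1]
    exact hn.1
  · rw [← hdist h.2.2.1 (p n).2.2.2.1]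
    exact hn.2

/-! ### The energy of a bounded potential -/

lemma BoundedPotential.integrable_mul {M : ℝ} {φ u : ℝ → ℝ} (hφ : BoundedPotential M φ)
    (hu : Integrable u) : Integrable (fun x => φ x * u x) := by
  refine hu.bdd_mul hφ.1 (c := M) ?_
  filter_upwards [hφ.2] with x hx
  rw [Real.norm_eq_abs, abs_of_nonneg hx.1]
  exact hx.2

lemma energy_eq {M : ℝ} {φ g g' : ℝ → ℝ} (hφ : BoundedPotential M φ) (h : Admissible g g') :
    energy φ g g' = (∫ x, φ x * g x ^ 2) - (1 / 2) * ∫ x, g' x ^ 2 := by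
  unfold energy
  rw [integral_sub (hφ.integrable_mul h.2.1) (h.2.2.1.const_mul _), integral_const_mul]

lemma energy_le {M : ℝ} {φ g g' : ℝ → ℝ} (hφ : BoundedPotential M φ) (h : Admissible g g') :
    energy φ g g' ≤ M - (1 / 2) * ∫ x, g' x ^ 2 := by
  have : (∫ x, φ x * g x ^ 2) ≤ ∫ x, M * g x ^ 2 := by
    refine integral_mono_ae (hφ.integrable_mul h.2.1) (h.2.1.const_mul M) ?_
    filter_upwards [hφ.2] with x hx
    exact mul_le_mul_of_nonneg_right hx.2 (sq_nonneg _)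
  rw [integral_const_mul, h.2.2.2, mul_one] at this
  rw [energy_eq hφ h]
  linarith

lemma energy_le_bound {M : ℝ} {φ g g' : ℝ → ℝ} (hφ : BoundedPotential M φ)
    (h : Admissible g g') : energy φ g g' ≤ M := by
  have h1 := energy_le hφ h
  have h2 : 0 ≤ ∫ x, g' x ^ 2 := integral_nonneg fun x => sq_nonneg _
  linarith

lemma neg_le_energy {M : ℝ} {φ g g' : ℝ → ℝ} (hφ : BoundedPotential M φ)
    (h : Admissible g g') : -((1 / 2) * ∫ x, g' x ^ 2) ≤ energy φ g g' := by
  have : 0 ≤ ∫ x, φ x * g x ^ 2 := by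
    refine integral_nonneg_of_ae ?_
    filter_upwards [hφ.2] with x hx
    exact mul_nonneg hx.1 (sq_nonneg _)
  rw [energy_eq hφ h]
  linarith

lemma energy_le_Ffun {M : ℝ} {φ g g' : ℝ → ℝ} (hφ : BoundedPotential M φ)
    (h : Admissible g g') : energy φ g g' ≤ Ffun φ := by
  refine le_csSup ⟨M, ?_⟩ ⟨g, g', h.1, h.2.1, h.2.2.1, h.2.2.2, rfl⟩
  rintro c ⟨k, k', h1, h2, h3, h4, rfl⟩
  exact energy_le_bound hφ ⟨h1, h2, h3, h4⟩

lemma Ffun_le {φ : ℝ → ℝ} {a : ℝ} (H : ∀ g g', Admissible g g' → energy φ g g' ≤ a) :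
    Ffun φ ≤ a := by
  obtain ⟨g₀, g₀', h₀⟩ := exists_admissible
  refine csSup_le ⟨_, g₀, g₀', h₀.1, h₀.2.1, h₀.2.2.1, h₀.2.2.2, rfl⟩ ?_
  rintro c ⟨k, k', h1, h2, h3, h4, rfl⟩
  exact H k k' ⟨h1, h2, h3, h4⟩

lemma energy_sub_le {M : ℝ} {φ g g' k k' : ℝ → ℝ} (hφ : BoundedPotential M φ)
    (hg : Admissible g g') (hk : Admissible k k') :
    energy φ g g' - energy φ k k' ≤
      M * (∫ x, |g x ^ 2 - k x ^ 2|) + (1 / 2) * ∫ x, |g' x ^ 2 - k' x ^ 2| := by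
  have h1 : (∫ x, φ x * g x ^ 2) - (∫ x, φ x * k x ^ 2) ≤ M * ∫ x, |g x ^ 2 - k x ^ 2| := by
    have hi : Integrable (fun x => |g x ^ 2 - k x ^ 2|) := (hg.2.1.sub hk.2.1).abs
    rw [← integral_sub (hφ.integrable_mul hg.2.1) (hφ.integrable_mul hk.2.1),
      ← integral_const_mul]
    refine integral_mono_ae ((hφ.integrable_mul hg.2.1).sub (hφ.integrable_mul hk.2.1))
      (hi.const_mul M) ?_
    filter_upwards [hφ.2] with x hx
    calc φ x * g x ^ 2 - φ x * k x ^ 2 = φ x * (g x ^ 2 - k x ^ 2) := by ring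
      _ ≤ φ x * |g x ^ 2 - k x ^ 2| := mul_le_mul_of_nonneg_left (le_abs_self _) hx.1
      _ ≤ M * |g x ^ 2 - k x ^ 2| := mul_le_mul_of_nonneg_right hx.2 (abs_nonneg _)
  have h2 : (∫ x, k' x ^ 2) - (∫ x, g' x ^ 2) ≤ ∫ x, |g' x ^ 2 - k' x ^ 2| := by
    rw [← integral_sub hk.2.2.1 hg.2.2.1]
    refine integral_mono (hk.2.2.1.sub hg.2.2.1) (hg.2.2.1.sub hk.2.2.1).abs fun x => ?_
    have := neg_le_abs (g' x ^ 2 - k' x ^ 2)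
    linarith
  rw [energy_eq hφ hg, energy_eq hφ hk]
  linarith

/-- One sequence of competitors computes `F(φ)` for all bounded potentials simultaneously. -/
lemma exists_seq_Ffun_eq_iSup {M : ℝ} (hM : 0 ≤ M) :
    ∃ G G' : ℕ → ℝ → ℝ, (∀ n, Admissible (G n) (G' n)) ∧
      ∀ φ, BoundedPotential M φ → Ffun φ = ⨆ n, energy φ (G n) (G' n) := by
  obtain ⟨G, G', hG, hdense⟩ := exists_seq_dense
  refine ⟨G, G', hG, fun φ hφ => le_antisymm ?_ ?_⟩
  · refine Ffun_le fun g g' hg => le_of_forall_pos_le_add fun ε hε => ?_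
    -- the continuity modulus `M δ + δ / 2` of the energy is at most `ε` for this `δ`
    obtain ⟨n, h1, h2⟩ := hdense g g' hg (ε / (M + 1)) (by positivity)
    have h3 := energy_sub_le hφ hg (hG n)
    have h4 : energy φ (G n) (G' n) ≤ ⨆ n, energy φ (G n) (G' n) :=
      le_ciSup (f := fun n => energy φ (G n) (G' n))
        ⟨M, by rintro _ ⟨m, rfl⟩; exact energy_le_bound hφ (hG m)⟩ n
    have h5 : (M + 1) * (ε / (M + 1)) = ε := by field_simp
    have h6 : 0 < ε / (M + 1) := by positivity
    have h7 := mul_le_mul_of_nonneg_left h1.le hM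
    linarith
  · exact ciSup_le fun n => energy_le_Ffun hφ (hG n)

/-! ### Comparison of two potentials -/

/-- The constant `B` bounds `g²` for every `g` of energy at least the lower bound `-K` of `F`.  The
additive form, with a free parameter `lam`, of the estimate `F(φ₁) - F(φ₂) ≤ √B ‖φ₁ - φ₂‖`. -/
lemma Ffun_le_add {M : ℝ} : ∃ B : ℝ, 0 ≤ B ∧ ∀ φ₁ φ₂ : ℝ → ℝ,
    BoundedPotential M φ₁ → BoundedPotential M φ₂ →
    Integrable (fun x => (φ₁ x - φ₂ x) ^ 2) → ∀ lam > 0,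
      Ffun φ₁ ≤ Ffun φ₂ + ((1 / (2 * lam)) * (∫ x, (φ₁ x - φ₂ x) ^ 2) + lam * B / 2) := by
  obtain ⟨g₀, g₀', h₀⟩ := exists_admissible
  set K : ℝ := (1 / 2) * ∫ x, g₀' x ^ 2 with hK
  refine ⟨max 0 (1 + 2 * (M + K)), le_max_left _ _, fun φ₁ φ₂ h1 h2 hint lam hlam => ?_⟩
  set B : ℝ := max 0 (1 + 2 * (M + K)) with hB
  have hB0 : 0 ≤ B := le_max_left _ _
  set D : ℝ := (1 / (2 * lam)) * (∫ x, (φ₁ x - φ₂ x) ^ 2) + lam * B / 2 with hD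
  have hD0 : 0 ≤ D := by
    have : 0 ≤ ∫ x, (φ₁ x - φ₂ x) ^ 2 := integral_nonneg fun x => sq_nonneg _
    positivity
  refine Ffun_le fun g g' hg => ?_
  rcases le_total (energy φ₁ g g') (-K) with hlow | hhigh
  -- competitors of energy at most `-K` lie below `F(φ₂)` and need no comparison
  · have := (neg_le_energy h2 h₀).trans (energy_le_Ffun h2 h₀)
    linarith
  have hgB : ∀ x, g x ^ 2 ≤ B := fun x => by
    have h3 := hg.sq_le x
    have h4 := energy_le h1 hg
    exact le_trans (by linarith) (le_max_right _ _)
  have hcmp : (∫ x, φ₁ x * g x ^ 2) - (∫ x, φ₂ x * g x ^ 2) ≤ D := by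
    have hi1 : Integrable (fun x => (1 / (2 * lam)) * (φ₁ x - φ₂ x) ^ 2) := hint.const_mul _
    have hi2 : Integrable (fun x => lam * B / 2 * g x ^ 2) := hg.2.1.const_mul _
    have hval : (∫ x, ((1 / (2 * lam)) * (φ₁ x - φ₂ x) ^ 2 + lam * B / 2 * g x ^ 2)) = D := by
      rw [integral_add hi1 hi2, integral_const_mul, integral_const_mul, hg.2.2.2, mul_one]
    rw [← hval, ← integral_sub (h1.integrable_mul hg.2.1) (h2.integrable_mul hg.2.1)]
    refine integral_mono ((h1.integrable_mul hg.2.1).sub (h2.integrable_mul hg.2.1))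
      (hi1.add hi2) fun x => ?_
    -- Young's inequality, then `g⁴ ≤ B g²`
    have hy : φ₁ x * g x ^ 2 - φ₂ x * g x ^ 2 ≤
        (1 / (2 * lam)) * (φ₁ x - φ₂ x) ^ 2 + lam / 2 * (g x ^ 2) ^ 2 := by
      have : (1 / (2 * lam)) * (φ₁ x - φ₂ x) ^ 2 + lam / 2 * (g x ^ 2) ^ 2
          - (φ₁ x * g x ^ 2 - φ₂ x * g x ^ 2)
          = (1 / (2 * lam)) * (φ₁ x - φ₂ x - lam * g x ^ 2) ^ 2 := by
        field_simp
        ring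
      have h5 : 0 ≤ (1 / (2 * lam)) * (φ₁ x - φ₂ x - lam * g x ^ 2) ^ 2 := by positivity
      linarith
    have hg4 : lam / 2 * (g x ^ 2) ^ 2 ≤ lam * B / 2 * g x ^ 2 := by
      have h6 : g x ^ 2 * g x ^ 2 ≤ B * g x ^ 2 :=
        mul_le_mul_of_nonneg_right (hgB x) (sq_nonneg _)
      have h7 := mul_le_mul_of_nonneg_left h6 (half_pos hlam).le
      linarith
    exact hy.trans (add_le_add_right hg4 _)
  have h8 := energy_le_Ffun h2 hg
  rw [energy_eq h2 hg] at h8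
  rw [energy_eq h1 hg]
  linarith

/-! ### Integration in time -/

lemma restrict_strip (s t : ℝ) :
    (volume : Measure (ℝ × ℝ)).restrict (Set.Icc s t ×ˢ Set.univ)
      = (volume.restrict (Set.Icc s t)).prod volume := by
  rw [Measure.volume_eq_prod, ← Measure.prod_restrict, Measure.restrict_univ]

/-- Square integrability of `ρ` alone does not make `ρ` measurable; together with `0 ≤ ρ` it does,
as then `ρ = √(ρ²)`. -/
lemma aestronglyMeasurable_of_InL2 {s t M : ℝ} {ρ : ℝ → ℝ → ℝ} (h : InL2 ρ s t)
    (hb : ∀ᵐ q : ℝ × ℝ ∂(volume.restrict (Set.Icc s t ×ˢ Set.univ)),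
      0 ≤ ρ q.1 q.2 ∧ ρ q.1 q.2 ≤ M) :
    AEStronglyMeasurable (fun q : ℝ × ℝ => ρ q.1 q.2)
      ((volume.restrict (Set.Icc s t)).prod volume) := by
  rw [InL2, restrict_strip] at h
  rw [restrict_strip] at hb
  refine (Real.continuous_sqrt.comp_aestronglyMeasurable h.aestronglyMeasurable).congr ?_
  filter_upwards [hb] with q hq
  exact Real.sqrt_sq hq.1

lemma ae_boundedPotential {s t M : ℝ} {ρ : ℝ → ℝ → ℝ} (h : InL2 ρ s t)
    (hb : ∀ᵐ q : ℝ × ℝ ∂(volume.restrict (Set.Icc s t ×ˢ Set.univ)),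
      0 ≤ ρ q.1 q.2 ∧ ρ q.1 q.2 ≤ M) :
    ∀ᵐ r ∂(volume.restrict (Set.Icc s t)), BoundedPotential M (ρ r) := by
  have hm := (aestronglyMeasurable_of_InL2 h hb).prodMk_left
  rw [restrict_strip] at hb
  filter_upwards [hm, Measure.ae_ae_of_ae_prod hb] with r h1 h2
  exact ⟨h1, h2⟩

lemma integrable_Ffun {s t M : ℝ} (hM : 0 ≤ M) {ρ : ℝ → ℝ → ℝ} (h : InL2 ρ s t)
    (hb : ∀ᵐ q : ℝ × ℝ ∂(volume.restrict (Set.Icc s t ×ˢ Set.univ)),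
      0 ≤ ρ q.1 q.2 ∧ ρ q.1 q.2 ≤ M) :
    Integrable (fun r => Ffun (ρ r)) (volume.restrict (Set.Icc s t)) := by
  obtain ⟨G, G', hG, hF⟩ := exists_seq_Ffun_eq_iSup hM
  obtain ⟨g₀, g₀', h₀⟩ := exists_admissible
  have hgood := ae_boundedPotential h hb
  have hρ := aestronglyMeasurable_of_InL2 h hb
  have hmeas : AEMeasurable (fun r => Ffun (ρ r)) (volume.restrict (Set.Icc s t)) := by
    have hn : ∀ n, AEMeasurable (fun r => energy (ρ r) (G n) (G' n))
        (volume.restrict (Set.Icc s t)) := fun n => by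
      have h1 : AEStronglyMeasurable (fun q : ℝ × ℝ => G n q.2 ^ 2)
          ((volume.restrict (Set.Icc s t)).prod volume) :=
        (hG n).2.1.aestronglyMeasurable.comp_snd
      have h2 : AEStronglyMeasurable (fun q : ℝ × ℝ => G' n q.2 ^ 2)
          ((volume.restrict (Set.Icc s t)).prod volume) :=
        (hG n).2.2.1.aestronglyMeasurable.comp_snd
      exact ((hρ.mul h1).sub (h2.const_mul (1 / 2))).integral_prod_right'.aemeasurable
    refine (AEMeasurable.iSup hn).congr ?_
    filter_upwards [hgood] with r hr
    exact (hF _ hr).symm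
  refine Integrable.of_bound hmeas.aestronglyMeasurable
    (M + (1 / 2) * ∫ x, g₀' x ^ 2) ?_
  filter_upwards [hgood] with r hr
  have h1 := (neg_le_energy hr h₀).trans (energy_le_Ffun hr h₀)
  have h2 : Ffun (ρ r) ≤ M := Ffun_le fun g g' hg => energy_le_bound hr hg
  have h3 : 0 ≤ ∫ x, g₀' x ^ 2 := integral_nonneg fun x => sq_nonneg _
  rw [Real.norm_eq_abs, abs_le]
  constructor <;> linarith

/-- Optimization over the free parameter: the minimum of `L² / (2 lam) + lam b / 2` over `lam > 0`
is at most `(1 + b) / 2 * L`. -/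
lemma le_of_forall_param {D L b : ℝ} (hL : 0 ≤ L) (hb : 0 ≤ b)
    (H : ∀ lam > 0, D ≤ (1 / (2 * lam)) * L ^ 2 + lam * b / 2) : D ≤ (1 + b) / 2 * L := by
  rcases hL.eq_or_lt with h0 | hpos
  · subst h0
    refine le_of_forall_pos_le_add fun ε hε => ?_
    have h1 := H (ε / (b + 1)) (by positivity)
    have h2 : (b + 1) * (ε / (b + 1)) = ε := by field_simp
    have h3 : 0 < ε / (b + 1) := by positivity
    have h4 : 0 ≤ ε / (b + 1) * b := by positivity
    simp at h1 ⊢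
    linarith
  · have h1 := H L hpos
    have h2 : (1 / (2 * L)) * L ^ 2 = L / 2 := by field_simp
    linarith

/-- Lipschitz continuity of `ρ ↦ ∫_s^t F(ρ(r,·)) dr` on `{ρ : 0 ≤ ρ ≤ M a.e.}`. -/
theorem F_time_integral_lipschitz (s t M : ℝ) (hs : 0 ≤ s) (hst : s < t) (hM : 0 ≤ M) :
    ∃ C : ℝ, ∀ ρ₁ ρ₂ : ℝ → ℝ → ℝ, InL2 ρ₁ s t → InL2 ρ₂ s t →
      (∀ᵐ q : ℝ × ℝ ∂(MeasureTheory.volume.restrict (Set.Icc s t ×ˢ Set.univ)),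
        0 ≤ ρ₁ q.1 q.2 ∧ ρ₁ q.1 q.2 ≤ M) →
      (∀ᵐ q : ℝ × ℝ ∂(MeasureTheory.volume.restrict (Set.Icc s t ×ˢ Set.univ)),
        0 ≤ ρ₂ q.1 q.2 ∧ ρ₂ q.1 q.2 ≤ M) →
      |(∫ r in Set.Icc s t, Ffun (ρ₁ r)) - (∫ r in Set.Icc s t, Ffun (ρ₂ r))| ≤
        C * Real.sqrt (l2sq (fun r z => ρ₁ r z - ρ₂ r z) s t) := by
  obtain ⟨B, hB, hcmp⟩ := Ffun_le_add (M := M)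
  refine ⟨(1 + (t - s) * B) / 2, fun ρ₁ ρ₂ h1 h2 hb1 hb2 => ?_⟩
  have hts : 0 ≤ t - s := (sub_pos.2 hst).le
  have hl2 : 0 ≤ l2sq (fun r z => ρ₁ r z - ρ₂ r z) s t := integral_nonneg fun q => sq_nonneg _
  have hint : Integrable (fun q : ℝ × ℝ => (ρ₁ q.1 q.2 - ρ₂ q.1 q.2) ^ 2)
      ((volume.restrict (Set.Icc s t)).prod volume) := by
    have hm1 := aestronglyMeasurable_of_InL2 h1 hb1
    have hm2 := aestronglyMeasurable_of_InL2 h2 hb2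
    rw [InL2, restrict_strip] at h1 h2
    exact (((memLp_two_iff_integrable_sq hm1).2 h1).sub
      ((memLp_two_iff_integrable_sq hm2).2 h2)).integrable_sq
  refine le_of_forall_param (Real.sqrt_nonneg _) (mul_nonneg hts hB) fun lam hlam => ?_
  rw [Real.sq_sqrt hl2]
  have hF1 := integrable_Ffun hM h1 hb1
  have hF2 := integrable_Ffun hM h2 hb2
  have hi := hint.integral_prod_left
  have hval : (∫ r in Set.Icc s t,
      ((1 / (2 * lam)) * (∫ z, (ρ₁ r z - ρ₂ r z) ^ 2) + lam * B / 2))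
      = (1 / (2 * lam)) * l2sq (fun r z => ρ₁ r z - ρ₂ r z) s t
        + lam * ((t - s) * B) / 2 := by
    rw [integral_add (hi.const_mul _) (integrable_const _), integral_const_mul, l2sq,
      restrict_strip, integral_prod _ hint, setIntegral_const]
    simp [hts]
    ring
  rw [← integral_sub hF1 hF2, ← hval, ← Real.norm_eq_abs]
  refine norm_integral_le_of_norm_le ((hi.const_mul _).add (integrable_const _)) ?_
  filter_upwards [ae_boundedPotential h1 hb1, ae_boundedPotential h2 hb2, hint.prod_right_ae]
    with r hr1 hr2 hr3
  have e1 := hcmp _ _ hr1 hr2 hr3 lam hlam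
  have hsymm : ∀ x, (ρ₂ r x - ρ₁ r x) ^ 2 = (ρ₁ r x - ρ₂ r x) ^ 2 := fun x => by ring
  have e2 := hcmp _ _ hr2 hr1 (by simp_rw [hsymm]; exact hr3) lam hlam
  simp_rw [hsymm] at e2
  rw [Real.norm_eq_abs, abs_le]
  constructor <;> linarith
end
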